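/- Let 0 < K̲ < K̄. For κ > 0 let A(κ) be the n×n real matrix, rows and columns indexed by Ω^Q, with entries A(κ)(q,q) = −φ κ q², A(κ)(q, q−1) = λ⁺ e^{−1} for q > q̲, A(κ)(q, q+1) = λ⁻ e^{−1} for q < q̄, and 0 otherwise. For every κ > 0 all roots of the characteristic polynomial of A(κ) are real; let λ_max(κ) denote the largest eigenvalue of A(κ). Then the ergodic constant γ : κ ↦ λ_max(κ)/κ is twice continuously differentiable on [K̲, K̄]. -/

import Mathlib

/-!
The matrix `A(κ)` is tridiagonal with constant positive sub- and superdiagonals, so conjugation by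
the diagonal matrix with entries `r ^ q`, `r = √(λ⁻ / λ⁺)`, turns it into a real symmetric
tridiagonal (Jacobi) matrix `Smat` with the same characteristic polynomial. Hence all roots of the
characteristic polynomial are real.

Smoothness of `λ_max` is the implicit function theorem applied to
`(κ, μ) ↦ det (μ - S(κ)) = 0`. It needs two inputs.

* Every eigenvalue of `S(κ)` is simple (`charpoly_separable`): an eigenvector is determined by its
  first entry through the three-term recurrence (`eq_zero_of_first_eq_zero`), so the eigenspaces
  are lines and, `S(κ)` being diagonalizable, the characteristic polynomial is separable.
* `λ_max` is continuous (`convexOn_lmax`): by the Rayleigh bound `v ⬝ S(κ) v ≤ λ_max(κ) (v ⬝ v)`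
  (`rayleigh_le`) it is a supremum of functions affine in `κ`, hence convex on the open half-line.

By continuity, `λ_max` coincides near each `κ > 0` with the smooth implicit branch through
`(κ, λ_max(κ))`, and division by `κ` preserves smoothness.
-/

/-- The matrix `A(κ)` from Theorem 2.2, rows and columns indexed by `Ω^Q = {q̲, …, q̄}`. -/
noncomputable def Amat (qlow qhigh : ℤ) (lp lm phi : ℝ) (kappa : ℝ) :
    Matrix {q : ℤ // q ∈ Finset.Icc qlow qhigh} {q : ℤ // q ∈ Finset.Icc qlow qhigh} ℝ :=
  fun q q' =>
    if (q' : ℤ) = (q : ℤ) then -phi * kappa * ((q : ℤ) : ℝ) ^ 2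
    else if (q' : ℤ) = (q : ℤ) - 1 then lp * Real.exp (-1)
    else if (q' : ℤ) = (q : ℤ) + 1 then lm * Real.exp (-1)
    else 0

/-- The symmetrized matrix: diagonal entries `d κ q²` (used with `d = -φ`), both neighbouring
diagonals constant equal to `c`. -/
noncomputable def Smat (qlow qhigh : ℤ) (c d : ℝ) (kappa : ℝ) :
    Matrix {q : ℤ // q ∈ Finset.Icc qlow qhigh} {q : ℤ // q ∈ Finset.Icc qlow qhigh} ℝ :=
  fun q q' =>
    if (q' : ℤ) = (q : ℤ) then d * kappa * ((q : ℤ) : ℝ) ^ 2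
    else if (q' : ℤ) = (q : ℤ) - 1 then c
    else if (q' : ℤ) = (q : ℤ) + 1 then c
    else 0

lemma Smat_isHermitian (qlow qhigh : ℤ) (c d kappa : ℝ) :
    (Smat qlow qhigh c d kappa).IsHermitian := by
  ext q q'
  simp only [Matrix.conjTranspose_apply, star_trivial, Smat]
  by_cases h : (q : ℤ) = q'
  · simp [h]
  · have h' : ¬ (q' : ℤ) = q := fun e => h e.symm
    simp only [h, h', if_false]
    split_ifs <;> first | rfl | omega

/-- `A(κ)` is conjugate to the symmetrized matrix through `diag (r ^ q)` with `r = √(λ⁻ / λ⁺)`. -/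
lemma charpoly_Amat (qlow qhigh : ℤ) (lp lm phi : ℝ) (hlp : 0 < lp) (hlm : 0 < lm)
    (kappa : ℝ) :
    (Amat qlow qhigh lp lm phi kappa).charpoly =
      (Smat qlow qhigh (√(lm / lp) * (lp * Real.exp (-1))) (-phi) kappa).charpoly := by
  set r := √(lm / lp) with hr
  have hr0 : r ≠ 0 := (Real.sqrt_pos.2 (div_pos hlm hlp)).ne'
  have hr2 : r * r * lp = lm := by
    rw [hr, Real.mul_self_sqrt (div_pos hlm hlp).le]; field_simp
  let D : (Matrix {q : ℤ // q ∈ Finset.Icc qlow qhigh}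
      {q : ℤ // q ∈ Finset.Icc qlow qhigh} ℝ)ˣ :=
    { val := Matrix.diagonal fun q => r ^ (q : ℤ)
      inv := Matrix.diagonal fun q => r ^ (-(q : ℤ))
      val_inv := by
        rw [Matrix.diagonal_mul_diagonal, ← Matrix.diagonal_one]
        congr 1; funext q; rw [← zpow_add₀ hr0]; simp
      inv_val := by
        rw [Matrix.diagonal_mul_diagonal, ← Matrix.diagonal_one]
        congr 1; funext q; rw [← zpow_add₀ hr0]; simp }
  rw [← Matrix.charpoly_units_conj D, ← Matrix.coe_units_inv]
  congr 1
  ext q q'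
  change (Matrix.diagonal (fun q : {q : ℤ // q ∈ Finset.Icc qlow qhigh} => r ^ (q : ℤ)) *
    Amat qlow qhigh lp lm phi kappa *
    Matrix.diagonal fun q : {q : ℤ // q ∈ Finset.Icc qlow qhigh} => r ^ (-(q : ℤ))) q q' = _
  rw [Matrix.mul_diagonal, Matrix.diagonal_mul]
  have key : ∀ x : ℝ, r ^ (q : ℤ) * x * r ^ (-(q' : ℤ)) = r ^ ((q : ℤ) - q') * x := by
    intro x
    rw [sub_eq_add_neg, zpow_add₀ hr0]; ring
  rw [key]
  simp only [Amat, Smat]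
  split_ifs with h1 h2 h3
  · simp [h1]
  · simp [h2]
  · rw [h3, ← hr2, show (q : ℤ) - (q + 1) = -1 by ring, zpow_neg_one]
    field_simp
  · simp

lemma isRoot_charpoly_iff {n : Type*} [Fintype n] [DecidableEq n] (M : Matrix n n ℝ) (mu : ℝ) :
    M.charpoly.IsRoot mu ↔ ∃ v : n → ℝ, v ≠ 0 ∧ M.mulVec v = mu • v := by
  rw [Polynomial.IsRoot.def, Matrix.eval_charpoly, ← Matrix.exists_mulVec_eq_zero_iff]
  refine exists_congr fun v => and_congr_right fun _ => ?_
  rw [Matrix.sub_mulVec, sub_eq_zero, Matrix.scalar_apply, ← Matrix.smul_one_eq_diagonal,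
    Matrix.smul_mulVec, Matrix.one_mulVec, eq_comm]

/-- Row `q` of the eigenvalue equation expresses `v (q + 1)` through `v q` and `v (q - 1)`, so an
eigenvector that vanishes at the lowest index vanishes identically. -/
lemma eq_zero_of_first_eq_zero {qlow qhigh : ℤ} {c d kappa mu : ℝ} (hc : c ≠ 0)
    {v : {q : ℤ // q ∈ Finset.Icc qlow qhigh} → ℝ}
    (hv : (Smat qlow qhigh c d kappa).mulVec v = mu • v)
    (h0 : ∀ q : {q : ℤ // q ∈ Finset.Icc qlow qhigh}, (q : ℤ) = qlow → v q = 0) : v = 0 := by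
  have main : ∀ k : ℕ, ∀ q : {q : ℤ // q ∈ Finset.Icc qlow qhigh},
      (q : ℤ) = qlow + k → v q = 0 := by
    intro k
    induction k using Nat.strong_induction_on with
    | _ k ih =>
      intro q hq
      rcases Nat.eq_zero_or_pos k with rfl | hk
      · exact h0 q (by simpa using hq)
      have hqm := Finset.mem_Icc.1 q.2
      have hlt : ∀ s : {q : ℤ // q ∈ Finset.Icc qlow qhigh}, (s : ℤ) < q → v s = 0 := by
        intro s hs
        have hsm := Finset.mem_Icc.1 s.2
        exact ih (s - qlow : ℤ).toNat (by omega) s (by omega)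
      let p : {q : ℤ // q ∈ Finset.Icc qlow qhigh} :=
        ⟨q - 1, Finset.mem_Icc.2 ⟨by omega, by omega⟩⟩
      have hp : ((p : ℤ)) = q - 1 := rfl
      have hrow := congrFun hv p
      rw [Pi.smul_apply, hlt p (by omega), smul_zero, Matrix.mulVec, dotProduct,
        Finset.sum_eq_single q] at hrow
      · have hS : Smat qlow qhigh c d kappa p q = c := by
          simp only [Smat]
          rw [if_neg (by omega), if_neg (by omega), if_pos (by omega)]
        rw [hS] at hrow
        exact (mul_eq_zero.1 hrow).resolve_left hc
      · intro s _ hs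
        have hs' : (s : ℤ) ≠ q := fun e => hs (Subtype.ext e)
        rcases lt_or_gt_of_ne hs' with h | h
        · rw [hlt s h, mul_zero]
        · have hS : Smat qlow qhigh c d kappa p s = 0 := by
            simp only [Smat]
            rw [if_neg (by omega), if_neg (by omega), if_neg (by omega)]
          rw [hS, zero_mul]
      · intro h
        exact absurd (Finset.mem_univ _) h
  funext q
  have hqm := Finset.mem_Icc.1 q.2
  exact main (q - qlow : ℤ).toNat q (by omega)

/-- All eigenvalues of the symmetrized matrix are simple. -/
lemma charpoly_separable {qlow qhigh : ℤ} (hq : qlow ≤ qhigh) {c : ℝ} (d kappa : ℝ) (hc : c ≠ 0) :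
    (Smat qlow qhigh c d kappa).charpoly.Separable := by
  have hS := Smat_isHermitian qlow qhigh c d kappa
  rw [hS.charpoly_eq]
  refine Polynomial.separable_prod_X_sub_C_iff.2 fun i j hij => ?_
  by_contra hne
  replace hij : hS.eigenvalues i = hS.eigenvalues j := by simpa using hij
  let e := hS.eigenvectorBasis
  have hi := hS.mulVec_eigenvectorBasis i
  have hj := hS.mulVec_eigenvectorBasis j
  rw [← hij] at hj
  let q0 : {q : ℤ // q ∈ Finset.Icc qlow qhigh} := ⟨qlow, Finset.mem_Icc.2 ⟨le_rfl, hq⟩⟩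
  -- the combination of the two eigenvectors that vanishes at the lowest index
  have hw : e j q0 • e i - e i q0 • e j = 0 := by
    have : (⇑(e j q0 • e i - e i q0 • e j) : _ → ℝ) = 0 := by
      refine eq_zero_of_first_eq_zero (mu := hS.eigenvalues i) (d := d) (kappa := kappa) hc ?_ ?_
      · simp only [WithLp.ofLp_sub, WithLp.ofLp_smul, Matrix.mulVec_sub, Matrix.mulVec_smul]
        rw [hi, hj, smul_sub, smul_comm, smul_comm (e i q0)]
      · intro q h
        obtain rfl : q = q0 := Subtype.ext h
        simp [mul_comm]
    ext q
    exact congrFun this q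
  have hortho : inner ℝ (e j) (e i) = 0 := e.orthonormal.2 (Ne.symm hne)
  have hnorm : inner ℝ (e i) (e i) = 1 := by simp [e.orthonormal.1 i]
  have hz : e j q0 = 0 := by
    have hin := congrArg (fun x => inner ℝ x (e i)) hw
    simpa [inner_sub_left, inner_smul_left, hortho] using hin
  have hzero : (⇑(e j) : _ → ℝ) = 0 := by
    refine eq_zero_of_first_eq_zero (mu := hS.eigenvalues i) (d := d) (kappa := kappa) hc hj ?_
    intro q h
    obtain rfl : q = q0 := Subtype.ext h
    exact hz
  have : e j = 0 := by
    ext q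
    exact congrFun hzero q
  have hnj := e.orthonormal.1 j
  rw [this] at hnj
  simp at hnj

lemma rayleigh_le {n : Type*} [Fintype n] [DecidableEq n] {M : Matrix n n ℝ} (hM : M.IsHermitian)
    {l : ℝ} (hl : ∀ mu, M.charpoly.IsRoot mu → mu ≤ l) (v : n → ℝ) :
    v ⬝ᵥ M.mulVec v ≤ l * (v ⬝ᵥ v) := by
  have hH : (l • (1 : Matrix n n ℝ) - M).IsHermitian :=
    Matrix.IsHermitian.sub (by simp [Matrix.IsHermitian]) hM
  have hP : (l • (1 : Matrix n n ℝ) - M).PosSemidef := by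
    rw [hH.posSemidef_iff_eigenvalues_nonneg]
    intro i
    have hi := hH.mulVec_eigenvectorBasis i
    have hroot : M.charpoly.IsRoot (l - hH.eigenvalues i) := by
      rw [isRoot_charpoly_iff]
      refine ⟨⇑(hH.eigenvectorBasis i), fun h => ?_, ?_⟩
      · have h0 : hH.eigenvectorBasis i = 0 := by
          ext q
          exact congrFun h q
        have h1 := hH.eigenvectorBasis.orthonormal.1 i
        rw [h0] at h1
        simp at h1
      · rw [Matrix.sub_mulVec, Matrix.smul_mulVec, Matrix.one_mulVec] at hi
        rw [sub_smul, ← hi, sub_sub_cancel]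
    have := hl _ hroot
    simp only [Pi.zero_apply]
    linarith
  have h := hP.dotProduct_mulVec_nonneg v
  rw [Matrix.sub_mulVec, Matrix.smul_mulVec, Matrix.one_mulVec, dotProduct_sub,
    dotProduct_smul] at h
  simp only [star_trivial, smul_eq_mul] at h
  linarith

/-- The largest eigenvalue is a supremum of Rayleigh quotients, which are affine in `κ`. -/
lemma convexOn_lmax {qlow qhigh : ℤ} {c d : ℝ} {lmax : ℝ → ℝ}
    (hlmax : ∀ kappa : ℝ, 0 < kappa →
      IsGreatest {mu : ℝ | (Smat qlow qhigh c d kappa).charpoly.IsRoot mu} (lmax kappa)) :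
    ConvexOn ℝ (Set.Ioi 0) lmax := by
  refine ⟨convex_Ioi 0, fun x hx y hy a b ha hb hab => ?_⟩
  have hz : 0 < a • x + b • y := convex_Ioi (0 : ℝ) hx hy ha hb hab
  obtain ⟨v, hv0, hv⟩ := (isRoot_charpoly_iff _ _).1 (hlmax _ hz).1
  have hpos : 0 < v ⬝ᵥ v := by
    refine lt_of_le_of_ne (Finset.sum_nonneg fun i _ => mul_self_nonneg _) fun h => hv0 ?_
    exact dotProduct_self_eq_zero.1 h.symm
  have hSz : Smat qlow qhigh c d (a • x + b • y) =
      a • Smat qlow qhigh c d x + b • Smat qlow qhigh c d y := by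
    ext q q'
    have hb' : b = 1 - a := by linarith
    simp only [Smat, Matrix.add_apply, Matrix.smul_apply, smul_eq_mul, hb']
    split_ifs <;> ring
  have h1 := rayleigh_le (Smat_isHermitian qlow qhigh c d x) (fun mu h => (hlmax x hx).2 h) v
  have h2 := rayleigh_le (Smat_isHermitian qlow qhigh c d y) (fun mu h => (hlmax y hy).2 h) v
  have h3 : lmax (a • x + b • y) * (v ⬝ᵥ v) =
      a * (v ⬝ᵥ (Smat qlow qhigh c d x).mulVec v) +
        b * (v ⬝ᵥ (Smat qlow qhigh c d y).mulVec v) := by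
    rw [← smul_eq_mul, ← dotProduct_smul, ← hv, hSz, Matrix.add_mulVec, Matrix.smul_mulVec,
      Matrix.smul_mulVec, dotProduct_add, dotProduct_smul, dotProduct_smul, smul_eq_mul,
      smul_eq_mul]
  refine le_of_mul_le_mul_right ?_ hpos
  rw [h3]
  simp only [smul_eq_mul]
  nlinarith [mul_le_mul_of_nonneg_left h1 ha, mul_le_mul_of_nonneg_left h2 hb]

lemma contDiff_eval_charpoly (qlow qhigh : ℤ) (c d : ℝ) :
    ContDiff ℝ 2 fun p : ℝ × ℝ => (Smat qlow qhigh c d p.1).charpoly.eval p.2 := by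
  simp only [Matrix.eval_charpoly, Matrix.det_apply]
  refine ContDiff.sum fun σ _ => ContDiff.const_smul _ (contDiff_prod fun i _ => ?_)
  simp only [Matrix.sub_apply, Matrix.scalar_apply, Matrix.diagonal_apply, Smat]
  split_ifs <;> fun_prop

/-- Implicit function theorem in two real variables, for a function `g` already known to be a
continuous solution of `F (x, g x) = 0`. -/
lemma contDiffAt_of_implicit {F : ℝ × ℝ → ℝ} {g : ℝ → ℝ} {x : ℝ} {D : ℝ} (hF : ContDiff ℝ 2 F)
    (hD : HasDerivAt (fun y => F (x, y)) D (g x)) (hD0 : D ≠ 0) (hg : ContinuousAt g x)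
    (hFg : ∀ᶠ t in nhds x, F (t, g t) = 0) : ContDiffAt ℝ 2 g x := by
  have cdf : ContDiffAt ℝ 2 F (x, g x) := hF.contDiffAt
  have hval : (fderiv ℝ F (x, g x) ∘L .inr ℝ ℝ ℝ) 1 = D := by
    have h1 : HasFDerivAt F (fderiv ℝ F (x, g x)) (x, g x) :=
      (cdf.differentiableAt (by norm_num)).hasFDerivAt
    have h2 : HasDerivAt (fun y : ℝ => (x, y)) ((0 : ℝ), (1 : ℝ)) (g x) :=
      (hasDerivAt_const _ _).prodMk (hasDerivAt_id _)
    simpa using (h1.comp_hasDerivAt (g x) h2).unique hD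
  have hinv : (fderiv ℝ F (x, g x) ∘L .inr ℝ ℝ ℝ).IsInvertible := by
    refine ⟨ContinuousLinearEquiv.unitsEquivAut ℝ (Units.mk0 D hD0), ?_⟩
    ext
    simp [← hval]
  have hev := cdf.eventually_apply_eq_iff_implicitFunction (by norm_num) hinv
  have htend : Filter.Tendsto (fun t => (t, g t)) (nhds x) (nhds (x, g x)) :=
    (continuousAt_id.prodMk hg)
  have hx0 : F (x, g x) = 0 := hFg.self_of_nhds
  refine (cdf.contDiffAt_implicitFunction (by norm_num) hinv).congr_of_eventuallyEq ?_
  filter_upwards [htend.eventually hev, hFg] with t ht ht0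
  exact (ht.1 (ht0.trans hx0.symm)).symm

theorem stmt10 (qlow qhigh : ℤ) (hlow : qlow < 0) (hhigh : 0 < qhigh)
    (lp lm phi : ℝ) (hlp : 0 < lp) (hlm : 0 < lm) (hphi : 0 ≤ phi)
    (Klow Khigh : ℝ) (hK : 0 < Klow) (hKK : Klow < Khigh)
    -- λ_max(κ) is the largest eigenvalue of A(κ)
    (lmax : ℝ → ℝ)
    (hlmax : ∀ kappa : ℝ, 0 < kappa →
      IsGreatest {mu : ℝ | (Amat qlow qhigh lp lm phi kappa).charpoly.IsRoot mu}
        (lmax kappa)) :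
    -- all roots of the characteristic polynomial of A(κ) are real
    (∀ kappa : ℝ, 0 < kappa → ∀ mu : ℂ,
      ((Amat qlow qhigh lp lm phi kappa).charpoly.map (algebraMap ℝ ℂ)).IsRoot mu →
      mu.im = 0) ∧
    -- κ ↦ λ_max(κ)/κ is twice continuously differentiable on [K̲, K̄]
    ContDiffOn ℝ 2 (fun kappa : ℝ => lmax kappa / kappa) (Set.Icc Klow Khigh) := by
  have hchar := charpoly_Amat qlow qhigh lp lm phi hlp hlm
  set c := √(lm / lp) * (lp * Real.exp (-1)) with hc
  have hc0 : c ≠ 0 :=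
    (mul_pos (Real.sqrt_pos.2 (div_pos hlm hlp)) (mul_pos hlp (Real.exp_pos _))).ne'
  simp only [hchar] at hlmax ⊢
  refine ⟨fun kappa _ mu hmu => ?_, fun kappa hkappa => ?_⟩
  · rw [(Smat_isHermitian qlow qhigh c (-phi) kappa).charpoly_eq, Polynomial.IsRoot.def,
      Polynomial.eval_map, Polynomial.eval₂_finsetProd, Finset.prod_eq_zero_iff] at hmu
    obtain ⟨i, -, hi⟩ := hmu
    simp only [Polynomial.eval₂_sub, Polynomial.eval₂_X, Polynomial.eval₂_C, sub_eq_zero] at hi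
    simp [hi]
  · have hpos : 0 < kappa := hK.trans_le hkappa.1
    have hcont : ContinuousAt lmax kappa :=
      ((convexOn_lmax hlmax).continuousOn isOpen_Ioi).continuousAt (Ioi_mem_nhds hpos)
    have hroot : (Smat qlow qhigh c (-phi) kappa).charpoly.eval (lmax kappa) = 0 :=
      (hlmax kappa hpos).1
    have hsep := charpoly_separable (hlow.trans hhigh).le (-phi) kappa hc0
    have hsmooth : ContDiffAt ℝ 2 lmax kappa := by
      refine contDiffAt_of_implicit (contDiff_eval_charpoly qlow qhigh c (-phi))
        ((Smat qlow qhigh c (-phi) kappa).charpoly.hasDerivAt (lmax kappa)) ?_ hcont ?_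
      · exact hsep.eval₂_derivative_ne_zero (RingHom.id ℝ) hroot
      · filter_upwards [Ioi_mem_nhds hpos] with t ht
        exact (hlmax t ht).1
    exact (hsmooth.div contDiffAt_id hpos.ne').contDiffWithinAt
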